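/- arXiv:2101.01567 — 2 statements merged into one kernel-verified Lean document; each statement's English description precedes it below -/
import Mathlib

section
/- Let n ∈ ℕ with n ≥ 1, and let γ be the 2-adic valuation of n! (the largest exponent e with 2^e dividing n!). Then the odd number Z := n!/2^γ satisfies Z ≡ 3^{α₃(n)} · (−1)^{α₅(n)} (mod 8). -/
/-!
Separating even and odd factors gives `n! = 2 ^ ⌊n/2⌋ * ⌊n/2⌋! * Q`, where `Q` is the product of the
odd numbers up to `n` (`factorial_split`). As `1 * 3 * 5 * 7 ≡ 1 (mod 8)`, the class of `Q` modulo 8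
depends only on `n % 8`: it is `3` for `n % 8 ∈ {3, 4}`, `-1` for `n % 8 ∈ {5, 6}` and `1` otherwise.
On the other side, `a_k + 2 a_{k+1} + 4 a_{k+2} = ⌊n / 2 ^ k⌋ % 8`, so replacing `n` by `⌊n/2⌋` shifts
the windows by one place and loses exactly the window `n % 8` at `k = 0`. Hence the odd part of `n!` and
`3 ^ α₃(n) * (-1) ^ α₅(n)` satisfy the same recursion `n ↦ ⌊n/2⌋` modulo 8.
-/

/-- `bit n k` is the k-th binary digit of `n` (so `n = Σ_k bit n k * 2^k`). -/
def bit (n k : ℕ) : ℕ := n / 2 ^ k % 2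

/-- `α₃(n)` = #{k ≥ 0 : a_k + 2a_{k+1} + 4a_{k+2} ∈ {3, 4}}. -/
noncomputable def alpha3 (n : ℕ) : ℕ :=
  Nat.card {k : ℕ | bit n k + 2 * bit n (k + 1) + 4 * bit n (k + 2) ∈ ({3, 4} : Set ℕ)}

/-- `α₅(n)` = #{k ≥ 0 : a_k + 2a_{k+1} + 4a_{k+2} ∈ {5, 6}}. -/
noncomputable def alpha5 (n : ℕ) : ℕ :=
  Nat.card {k : ℕ | bit n k + 2 * bit n (k + 1) + 4 * bit n (k + 2) ∈ ({5, 6} : Set ℕ)}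

theorem window_eq (n k : ℕ) :
    bit n k + 2 * bit n (k + 1) + 4 * bit n (k + 2) = n / 2 ^ k % 8 := by
  unfold bit
  rw [pow_add, pow_add, ← Nat.div_div_eq_div_mul, ← Nat.div_div_eq_div_mul]
  omega

/-- The number of indices `k` for which the three-digit window of `n` starting at `k` lies in `A`. -/
noncomputable def windowCount (A : Set ℕ) (n : ℕ) : ℕ :=
  Nat.card {k : ℕ | n / 2 ^ k % 8 ∈ A}

theorem alpha3_eq (n : ℕ) : alpha3 n = windowCount {3, 4} n := by
  simp only [alpha3, windowCount, window_eq]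

theorem alpha5_eq (n : ℕ) : alpha5 n = windowCount {5, 6} n := by
  simp only [alpha5, windowCount, window_eq]

/-- Only windows in `A ∌ 0` are counted, so the windows of zeros beyond the leading digit of `n` do not
matter and the index set is finite. -/
theorem finite_windows {A : Set ℕ} (hA : 0 ∉ A) (n : ℕ) :
    {k : ℕ | n / 2 ^ k % 8 ∈ A}.Finite := by
  refine (Set.finite_lt_nat n).subset fun k hk => ?_
  by_contra h
  have h1 : n < 2 ^ k := lt_of_le_of_lt (not_lt.mp h) Nat.lt_two_pow_self
  simp only [Set.mem_ofPred_eq, Nat.div_eq_of_lt h1, Nat.zero_mod] at hk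
  exact hA hk

theorem windowCount_zero {A : Set ℕ} (hA : 0 ∉ A) : windowCount A 0 = 0 := by
  simp [windowCount, hA]

open Classical in
theorem windowCount_rec {A : Set ℕ} (hA : 0 ∉ A) (n : ℕ) :
    windowCount A n = windowCount A (n / 2) + if n % 8 ∈ A then 1 else 0 := by
  have hshift : ∀ k, n / 2 ^ (k + 1) = n / 2 / 2 ^ k := fun k => by
    rw [pow_succ', Nat.div_div_eq_div_mul]
  have himg : (Nat.succ '' {k : ℕ | n / 2 / 2 ^ k % 8 ∈ A}).ncard = windowCount A (n / 2) :=
    Set.ncard_image_of_injective _ Nat.succ_injective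
  rw [← himg]
  change Set.ncard {k : ℕ | n / 2 ^ k % 8 ∈ A} = _
  split_ifs with h
  · rw [← Set.ncard_insert_of_notMem (a := 0) (by simp)
      ((finite_windows hA (n / 2)).image _)]
    congr 1
    ext k
    cases k with
    | zero => simp [h]
    | succ k => simp [hshift]
  · rw [add_zero]
    congr 1
    ext k
    cases k with
    | zero => simp [h]
    | succ k => simp [hshift]

/-- The product of the first `m` odd numbers. -/
def oddProd : ℕ → ℕ
  | 0 => 1
  | m + 1 => oddProd m * (2 * m + 1)

theorem oddProd_mod (m : ℕ) :
    (m % 4 = 0 → oddProd m % 8 = 1) ∧ (m % 4 = 1 → oddProd m % 8 = 1) ∧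
    (m % 4 = 2 → oddProd m % 8 = 3) ∧ (m % 4 = 3 → oddProd m % 8 = 7) := by
  induction m with
  | zero => simp [oddProd]
  | succ m ih =>
    have hm : m % 4 = 0 ∨ m % 4 = 1 ∨ m % 4 = 2 ∨ m % 4 = 3 := by omega
    have h2 : (2 * m + 1) % 8 = 2 * (m % 4) + 1 := by omega
    rw [oddProd, Nat.mul_mod, h2]
    rcases hm with h | h | h | h <;> simp [h] at ih <;> simp [h, ih, Nat.add_mod]

theorem factorial_two_mul (m : ℕ) :
    (2 * m).factorial = 2 ^ m * m.factorial * oddProd m := by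
  induction m with
  | zero => simp [oddProd]
  | succ m ih =>
    rw [show 2 * (m + 1) = 2 * m + 1 + 1 by ring, Nat.factorial_succ, Nat.factorial_succ, ih,
      Nat.factorial_succ, oddProd]
    ring

/-- There are `(n + 1) / 2` odd numbers up to `n`. -/
theorem factorial_split (n : ℕ) :
    n.factorial = 2 ^ (n / 2) * (n / 2).factorial * oddProd ((n + 1) / 2) := by
  obtain ⟨m, rfl | rfl⟩ := Nat.even_or_odd' n
  · rw [show 2 * m / 2 = m by omega, show (2 * m + 1) / 2 = m by omega, factorial_two_mul]
  · rw [show (2 * m + 1) / 2 = m by omega, show (2 * m + 1 + 1) / 2 = m + 1 by omega,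
      Nat.factorial_succ, factorial_two_mul, oddProd]
    ring

open Classical in
theorem oddProd_modEq (n : ℕ) :
    ((oddProd ((n + 1) / 2) : ℕ) : ℤ) ≡
      3 ^ (if n % 8 ∈ ({3, 4} : Set ℕ) then 1 else 0) *
        (-1) ^ (if n % 8 ∈ ({5, 6} : Set ℕ) then 1 else 0) [ZMOD 8] := by
  obtain ⟨h0, h1, h2, h3⟩ := oddProd_mod ((n + 1) / 2)
  have hn : n % 8 < 8 := Nat.mod_lt _ (by norm_num)
  unfold Int.ModEq
  generalize hr : n % 8 = r at hn
  interval_cases r <;> simp <;> omega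

/-- The odd part of `n!`, as a factor in a decomposition of `n!`, with its class modulo 8. -/
theorem exists_odd_part (n : ℕ) : ∃ g Z : ℕ, n.factorial = 2 ^ g * Z ∧
    Z % 2 = 1 ∧ (Z : ℤ) ≡ 3 ^ alpha3 n * (-1) ^ alpha5 n [ZMOD 8] := by
  classical
  induction n using Nat.strong_induction_on with
  | _ n ih =>
    rcases Nat.eq_zero_or_pos n with rfl | hn
    · exact ⟨0, 1, by simp, by simp, by
        simp [alpha3_eq, alpha5_eq, windowCount_zero]⟩
    · obtain ⟨g, Z, h1, h2, h3⟩ := ih (n / 2) (by omega)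
      refine ⟨n / 2 + g, Z * oddProd ((n + 1) / 2), ?_, ?_, ?_⟩
      · rw [factorial_split n, h1]
        ring
      · obtain ⟨k0, k1, k2, k3⟩ := oddProd_mod ((n + 1) / 2)
        have : oddProd ((n + 1) / 2) % 2 = 1 := by omega
        rw [Nat.mul_mod, h2, this]
      · rw [alpha3_eq, alpha5_eq] at h3 ⊢
        rw [windowCount_rec (by simp) n, windowCount_rec (A := {5, 6}) (by simp) n]
        have := h3.mul (oddProd_modEq n)
        rw [Nat.cast_mul, pow_add, pow_add, mul_mul_mul_comm]
        -- The two sides differ only in decidability instances.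
        convert this

open Nat in
theorem stmt_3 (n : ℕ) (hn : 1 ≤ n) (γ : ℕ) (hγ : γ = padicValNat 2 (n !)) :
    ((n ! / 2 ^ γ : ℕ) : ℤ) ≡ 3 ^ alpha3 n * (-1) ^ alpha5 n [ZMOD 8] := by
  obtain ⟨g, Z, h1, h2, h3⟩ := exists_odd_part n
  have hZ : padicValNat 2 Z = 0 := padicValNat.eq_zero_of_not_dvd (by omega)
  have hg : γ = g := by
    rw [hγ, h1, padicValNat.mul (by positivity) (by omega), hZ, padicValNat.prime_pow, add_zero]
  rw [hg, h1, Nat.mul_div_cancel_left _ (by positivity)]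
  exact h3
end

section
/- Let k ≥ 5 and let n = 2^k + 7. Then Z(n) ≡ 2 (mod 8). -/
/-!
For `n = 2 ^ k + 7` the valuation of `n!` at `2` is `2 ^ k + 3`, which is odd, so `Z n` is twice the
odd part of `n!` and it suffices that this odd part is `1` modulo `4`.

The identity `(2m)! = 2 ^ m * m! * (1 * 3 * ⋯ * (2m - 1))` shows by induction on `k ≥ 2` that
`(2 ^ k)! = 2 ^ (2 ^ k - 1) * u` with `u ≡ 3 (mod 4)`, since the product of the first `4j` odd
numbers is `1` modulo `4`. The seven remaining factors `2 ^ k + 1, …, 2 ^ k + 7` contribute `2 ^ 4`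
and an odd part that is `3` modulo `4`, and `3 * 3 ≡ 1 (mod 4)`.
-/

open Nat in
/-- `Z n = n! / 4^⌊γ/2⌋` where `γ` is the 2-adic valuation of `n!`,
so that `n! = 4^⌊γ/2⌋ * Z n`. -/
def Z (n : ℕ) : ℕ := n ! / 4 ^ (padicValNat 2 (n !) / 2)

open Nat in
theorem factorial_two_mul_eq (m : ℕ) :
    (2 * m)! = 2 ^ m * m ! * ∏ i ∈ Finset.range m, (2 * i + 1) := by
  induction m with
  | zero => simp
  | succ m ih =>
    rw [Finset.prod_range_succ, show 2 * (m + 1) = 2 * m + 1 + 1 by ring, Nat.factorial_succ,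
      Nat.factorial_succ, ih, Nat.factorial_succ m]
    ring

theorem prod_odd_mod_four (j : ℕ) :
    (∏ i ∈ Finset.range (4 * j), (2 * i + 1)) % 4 = 1 := by
  induction j with
  | zero => simp
  | succ j ih =>
    rw [show 4 * (j + 1) = 4 * j + 1 + 1 + 1 + 1 by ring]
    simp only [Finset.prod_range_succ]
    have h1 : 2 * (4 * j) + 1 ≡ 1 [MOD 4] := by unfold Nat.ModEq; omega
    have h2 : 2 * (4 * j + 1) + 1 ≡ 3 [MOD 4] := by unfold Nat.ModEq; omega
    have h3 : 2 * (4 * j + 1 + 1) + 1 ≡ 1 [MOD 4] := by unfold Nat.ModEq; omega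
    have h4 : 2 * (4 * j + 1 + 1 + 1) + 1 ≡ 3 [MOD 4] := by unfold Nat.ModEq; omega
    exact ((((show _ ≡ 1 [MOD 4] from ih).mul h1).mul h2).mul h3).mul h4

open Nat in
/-- The odd part of `(2 ^ k)!` is `3` modulo `4` for `k ≥ 2`. The factor `2` on the left stands in
for the exponent `2 ^ k - 1` on the right, avoiding truncated subtraction. -/
theorem two_mul_factorial_two_pow (k : ℕ) :
    ∃ u, 2 * (2 ^ (k + 2))! = 2 ^ (2 ^ (k + 2)) * u ∧ u % 4 = 3 := by
  induction k with
  | zero => exact ⟨3, by decide, rfl⟩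
  | succ k ih =>
    obtain ⟨u, hu, hu4⟩ := ih
    refine ⟨u * ∏ i ∈ Finset.range (4 * 2 ^ k), (2 * i + 1), ?_, ?_⟩
    · rw [show 2 ^ (k + 1 + 2) = 2 * 2 ^ (k + 2) by ring, factorial_two_mul_eq,
        show 4 * 2 ^ k = 2 ^ (k + 2) by ring, two_mul (2 ^ (k + 2)), pow_add 2 (2 ^ (k + 2))]
      linear_combination
        (2 ^ 2 ^ (k + 2) * ∏ i ∈ Finset.range (2 ^ (k + 2)), (2 * i + 1)) * hu
    · rw [Nat.mul_mod, hu4, prod_odd_mod_four]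

open Nat in
theorem Z_eq_two_mul {n e w : ℕ} (h : n ! = 2 ^ (2 * e + 1) * w) (hw : w % 2 = 1) :
    Z n = 2 * w := by
  have hv : padicValNat 2 (n !) = 2 * e + 1 := by
    rw [h, padicValNat.mul (by positivity) (by omega), padicValNat.prime_pow,
      padicValNat.eq_zero_of_not_dvd (by omega), add_zero]
  rw [Z, hv, show (2 * e + 1) / 2 = e by omega, h,
    show 2 ^ (2 * e + 1) * w = 4 ^ e * (2 * w) by rw [pow_succ, pow_mul]; ring]
  exact Nat.mul_div_cancel_left _ (by positivity)

theorem stmt_6 (k : ℕ) (hk : 5 ≤ k) (n : ℕ) (hn : n = 2 ^ k + 7) :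
    Z n % 8 = 2 := by
  obtain ⟨j, rfl⟩ := Nat.exists_eq_add_of_le' hk
  obtain ⟨u, hu, hu4⟩ := two_mul_factorial_two_pow (j + 3)
  rw [show j + 3 + 2 = j + 5 by ring] at hu
  obtain ⟨b, hb⟩ : ∃ b, b = 2 ^ j := ⟨_, rfl⟩
  have hN : 2 ^ (j + 5) = 32 * b := by rw [hb]; ring
  rw [hN] at hn hu
  -- The odd parts of `2 ^ k + 1, …, 2 ^ k + 7`, where `2 ^ k = 32 * b`.
  set q := (32 * b + 1) * (16 * b + 1) * (32 * b + 3) * (8 * b + 1) * (32 * b + 5) *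
    (16 * b + 3) * (32 * b + 7) with hq
  have hq4 : q % 4 = 3 := by
    have h1 : 32 * b + 1 ≡ 1 [MOD 4] := by unfold Nat.ModEq; omega
    have h2 : 16 * b + 1 ≡ 1 [MOD 4] := by unfold Nat.ModEq; omega
    have h3 : 32 * b + 3 ≡ 3 [MOD 4] := by unfold Nat.ModEq; omega
    have h4 : 8 * b + 1 ≡ 1 [MOD 4] := by unfold Nat.ModEq; omega
    have h5 : 32 * b + 5 ≡ 1 [MOD 4] := by unfold Nat.ModEq; omega
    have h6 : 16 * b + 3 ≡ 3 [MOD 4] := by unfold Nat.ModEq; omega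
    have h7 : 32 * b + 7 ≡ 3 [MOD 4] := by unfold Nat.ModEq; omega
    exact (((((h1.mul h2).mul h3).mul h4).mul h5).mul h6).mul h7
  have hw : (u * q) % 4 = 1 := by rw [Nat.mul_mod, hu4, hq4]
  have hf : Nat.factorial n = 2 ^ (2 * (16 * b + 1) + 1) * (u * q) := by
    have h7 : Nat.factorial n = 2 ^ 3 * q * (2 * Nat.factorial (32 * b)) := by
      rw [hn, hq]
      simp only [Nat.factorial_succ]
      ring
    rw [h7, hu]
    ring
  rw [Z_eq_two_mul hf (by omega)]
  omega
end
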